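/- Let κ ∈ ℝ, and let X : ℝ → M_{n,r}(ℝ), Φ : ℝ → so(n), Ψ : ℝ → so(r) be differentiable curves. For λ ∈ ℝ define the (n+r)×(n+r) matrices L(λ) with blocks (-λΦ, X; -Xᵀ, λκΨ) and A(λ) with blocks (-Φ, 0; 0, κΨ). Then d/dt L(λ) = [L(λ), A(λ)] holds at time t for every λ ∈ ℝ if and only if at time t one has X' = ΦX + κXΨ, Φ' = 0, and κΨ' = 0. (Lax representation of the geodesic flow of the Jensen metric ds²_κ, i.e., the case Γ = 0.) -/

import Mathlib

open Matrix

/-- Entrywise derivative of a matrix-valued curve. -/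
def HasMatDerivAt {m k : Type*} {E : Type*} [NormedAddCommGroup E] [NormedSpace ℝ E]
    (F : ℝ → Matrix m k E) (F' : Matrix m k E) (t : ℝ) : Prop :=
  ∀ i j, HasDerivAt (fun s => F s i j) (F' i j) t

/-- The Lax matrix `L(λ)` of the geodesic flow of the Jensen metric `ds²_κ`. -/
def geodesicLax {n r : ℕ} (κ : ℝ) (X : Matrix (Fin n) (Fin r) ℝ)
    (Φ : Matrix (Fin n) (Fin n) ℝ) (Ψ : Matrix (Fin r) (Fin r) ℝ) (lam : ℝ) :
    Matrix (Fin n ⊕ Fin r) (Fin n ⊕ Fin r) ℝ :=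
  fromBlocks (-(lam • Φ)) X (-Xᵀ) ((lam * κ) • Ψ)

/-- The matrix `A(λ)` of the Lax pair of the geodesic flow of `ds²_κ`. -/
def geodesicLaxA {n r : ℕ} (κ : ℝ)
    (Φ : Matrix (Fin n) (Fin n) ℝ) (Ψ : Matrix (Fin r) (Fin r) ℝ) :
    Matrix (Fin n ⊕ Fin r) (Fin n ⊕ Fin r) ℝ :=
  fromBlocks (-Φ) 0 0 (κ • Ψ)

/-! Writing `X̂` for the off-diagonal skew matrix `(0, X; -Xᵀ, 0)`, one has `L(λ) = λA + X̂`, so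
`[L(λ), A] = [X̂, A]` does not depend on `λ`, and it is the off-diagonal skew matrix of
`ΦX + κXΨ`. Since `L(λ)` is linear in `(X, Φ, Ψ)`, the Lax equation can then be read off block by
block: the off-diagonal blocks give the equation for `X'`, the diagonal ones say that `λΦ'` and
`λκΨ'` vanish. -/

namespace HasMatDerivAt

variable {l m n o E : Type*} [NormedAddCommGroup E] [NormedSpace ℝ E] {t : ℝ}

theorem unique {F : ℝ → Matrix m n E} {F₀ F₁ : Matrix m n E} (h₀ : HasMatDerivAt F F₀ t)
    (h₁ : HasMatDerivAt F F₁ t) : F₀ = F₁ :=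
  Matrix.ext fun i j => (h₀ i j).unique (h₁ i j)

theorem iff_eq {F : ℝ → Matrix m n E} {F₀ F₁ : Matrix m n E} (h : HasMatDerivAt F F₀ t) :
    HasMatDerivAt F F₁ t ↔ F₀ = F₁ :=
  ⟨h.unique, fun h_eq => h_eq ▸ h⟩

theorem neg {F : ℝ → Matrix m n E} {F' : Matrix m n E} (h : HasMatDerivAt F F' t) :
    HasMatDerivAt (fun s => -F s) (-F') t :=
  fun i j => (h i j).fun_neg

theorem const_smul {R : Type*} [Monoid R] [DistribMulAction R E] [SMulCommClass ℝ R E]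
    [ContinuousConstSMul R E] {F : ℝ → Matrix m n E} {F' : Matrix m n E} (c : R)
    (h : HasMatDerivAt F F' t) : HasMatDerivAt (fun s => c • F s) (c • F') t :=
  fun i j => (h i j).fun_const_smul c

theorem transpose {F : ℝ → Matrix m n E} {F' : Matrix m n E} (h : HasMatDerivAt F F' t) :
    HasMatDerivAt (fun s => (F s)ᵀ) F'ᵀ t :=
  fun i j => h j i

theorem fromBlocks {F : ℝ → Matrix n l E} {G : ℝ → Matrix n m E} {H : ℝ → Matrix o l E}
    {K : ℝ → Matrix o m E} {F' : Matrix n l E} {G' : Matrix n m E} {H' : Matrix o l E}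
    {K' : Matrix o m E} (hF : HasMatDerivAt F F' t) (hG : HasMatDerivAt G G' t)
    (hH : HasMatDerivAt H H' t) (hK : HasMatDerivAt K K' t) :
    HasMatDerivAt (fun s => Matrix.fromBlocks (F s) (G s) (H s) (K s))
      (Matrix.fromBlocks F' G' H' K') t := by
  rintro (i | i) (j | j)
  exacts [hF i j, hG i j, hH i j, hK i j]

end HasMatDerivAt

section OffDiagSkew

variable {m n R : Type*}

/-- The off-diagonal skew-symmetric matrix `(0, X; -Xᵀ, 0)` of a rectangular matrix `X`, which is
the part of the Lax matrix that does not depend on the spectral parameter. -/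
def offDiagSkew [NegZeroClass R] (X : Matrix m n R) : Matrix (m ⊕ n) (m ⊕ n) R :=
  fromBlocks 0 X (-Xᵀ) 0

theorem offDiagSkew_commutator_fromBlocks_diagonal [Fintype m] [Fintype n]
    [NonUnitalCommRing R] (X : Matrix m n R) {P : Matrix m m R} {Q : Matrix n n R}
    (hP : Pᵀ = -P) (hQ : Qᵀ = -Q) :
    offDiagSkew X * fromBlocks P 0 0 Q - fromBlocks P 0 0 Q * offDiagSkew X =
      offDiagSkew (X * Q - P * X) := by
  have lower_left : -Xᵀ * P - Q * -Xᵀ = -(X * Q - P * X)ᵀ := by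
    simp only [transpose_sub, transpose_mul, hP, hQ, Matrix.neg_mul, Matrix.mul_neg]
    abel
  rw [offDiagSkew, offDiagSkew, ← lower_left, fromBlocks_multiply, fromBlocks_multiply,
    sub_eq_add_neg, fromBlocks_neg, fromBlocks_add]
  simp [sub_eq_add_neg]

end OffDiagSkew

section GeodesicLax

variable {n r : ℕ} (κ lam : ℝ)

theorem hasMatDerivAt_geodesicLax {X : ℝ → Matrix (Fin n) (Fin r) ℝ}
    {Φ : ℝ → Matrix (Fin n) (Fin n) ℝ} {Ψ : ℝ → Matrix (Fin r) (Fin r) ℝ}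
    {X' : Matrix (Fin n) (Fin r) ℝ} {Φ' : Matrix (Fin n) (Fin n) ℝ}
    {Ψ' : Matrix (Fin r) (Fin r) ℝ} {t : ℝ} (hX : HasMatDerivAt X X' t)
    (hΦ : HasMatDerivAt Φ Φ' t) (hΨ : HasMatDerivAt Ψ Ψ' t) :
    HasMatDerivAt (fun s => geodesicLax κ (X s) (Φ s) (Ψ s) lam)
      (geodesicLax κ X' Φ' Ψ' lam) t :=
  (hΦ.const_smul lam).neg.fromBlocks hX hX.transpose.neg (hΨ.const_smul (lam * κ))

variable (X Y : Matrix (Fin n) (Fin r) ℝ) (Φ : Matrix (Fin n) (Fin n) ℝ)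
  (Ψ : Matrix (Fin r) (Fin r) ℝ)

theorem geodesicLax_eq_smul_add_offDiagSkew :
    geodesicLax κ X Φ Ψ lam = lam • geodesicLaxA κ Φ Ψ + offDiagSkew X := by
  simp [geodesicLax, geodesicLaxA, offDiagSkew, fromBlocks_smul, fromBlocks_add, smul_smul]

theorem geodesicLax_eq_offDiagSkew_iff :
    geodesicLax κ X Φ Ψ lam = offDiagSkew Y ↔ X = Y ∧ lam • Φ = 0 ∧ lam • κ • Ψ = 0 := by
  rw [geodesicLax, offDiagSkew, fromBlocks_inj, neg_eq_zero, neg_inj, transpose_inj, mul_smul]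
  tauto

variable {Φ Ψ}

theorem geodesicLax_commutator_geodesicLaxA (hΦ : Φᵀ = -Φ) (hΨ : Ψᵀ = -Ψ) :
    geodesicLax κ X Φ Ψ lam * geodesicLaxA κ Φ Ψ -
        geodesicLaxA κ Φ Ψ * geodesicLax κ X Φ Ψ lam =
      offDiagSkew (Φ * X + κ • (X * Ψ)) := by
  have hκΨ : (κ • Ψ)ᵀ = -(κ • Ψ) := by rw [transpose_smul, hΨ, smul_neg]
  have hΦ_neg : (-Φ)ᵀ = -(-Φ) := by rw [transpose_neg, hΦ]
  calc
    _ = offDiagSkew X * geodesicLaxA κ Φ Ψ - geodesicLaxA κ Φ Ψ * offDiagSkew X := by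
      rw [geodesicLax_eq_smul_add_offDiagSkew, add_mul, mul_add, smul_mul_assoc,
        mul_smul_comm, add_sub_add_left_eq_sub]
    _ = offDiagSkew (X * (κ • Ψ) - -Φ * X) :=
      offDiagSkew_commutator_fromBlocks_diagonal X hΦ_neg hκΨ
    _ = offDiagSkew (Φ * X + κ • (X * Ψ)) := by
      rw [Matrix.neg_mul, sub_neg_eq_add, Matrix.mul_smul, add_comm]

end GeodesicLax

theorem geodesic_lax_representation_general {n r : ℕ} (κ lam : ℝ)
    {X : ℝ → Matrix (Fin n) (Fin r) ℝ}
    {Φ : ℝ → Matrix (Fin n) (Fin n) ℝ} {Ψ : ℝ → Matrix (Fin r) (Fin r) ℝ}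
    {X' : Matrix (Fin n) (Fin r) ℝ} {Φ' : Matrix (Fin n) (Fin n) ℝ}
    {Ψ' : Matrix (Fin r) (Fin r) ℝ} {t : ℝ}
    (hΦskew : (Φ t)ᵀ = -Φ t) (hΨskew : (Ψ t)ᵀ = -Ψ t)
    (hX : HasMatDerivAt X X' t) (hΦ : HasMatDerivAt Φ Φ' t)
    (hΨ : HasMatDerivAt Ψ Ψ' t) :
    HasMatDerivAt (fun s => geodesicLax κ (X s) (Φ s) (Ψ s) lam)
        (geodesicLax κ (X t) (Φ t) (Ψ t) lam * geodesicLaxA κ (Φ t) (Ψ t)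
          - geodesicLaxA κ (Φ t) (Ψ t) * geodesicLax κ (X t) (Φ t) (Ψ t) lam) t
      ↔ X' = Φ t * X t + κ • (X t * Ψ t) ∧ lam • Φ' = 0 ∧ lam • κ • Ψ' = 0 := by
  rw [geodesicLax_commutator_geodesicLaxA κ lam (X t) hΦskew hΨskew,
    (hasMatDerivAt_geodesicLax κ lam hX hΦ hΨ).iff_eq, geodesicLax_eq_offDiagSkew_iff]

/-- Lax representation of the geodesic flow of the Jensen metric
`ds²_κ` (the case `Γ = 0`): `d/dt L(λ) = [L(λ), A(λ)]` for all `λ` iff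
`X' = ΦX + κXΨ`, `Φ' = 0`, `κΨ' = 0`. -/
theorem geodesic_lax_representation (n r : ℕ) (κ : ℝ)
    (X : ℝ → Matrix (Fin n) (Fin r) ℝ)
    (Φ : ℝ → Matrix (Fin n) (Fin n) ℝ) (Ψ : ℝ → Matrix (Fin r) (Fin r) ℝ)
    (hΦskew : ∀ s, (Φ s)ᵀ = -Φ s) (hΨskew : ∀ s, (Ψ s)ᵀ = -Ψ s)
    (X' : Matrix (Fin n) (Fin r) ℝ) (Φ' : Matrix (Fin n) (Fin n) ℝ)
    (Ψ' : Matrix (Fin r) (Fin r) ℝ) (t : ℝ)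
    (hX : HasMatDerivAt X X' t) (hΦ : HasMatDerivAt Φ Φ' t)
    (hΨ : HasMatDerivAt Ψ Ψ' t) :
    (∀ lam : ℝ,
        HasMatDerivAt (fun s => geodesicLax κ (X s) (Φ s) (Ψ s) lam)
          (geodesicLax κ (X t) (Φ t) (Ψ t) lam * geodesicLaxA κ (Φ t) (Ψ t)
            - geodesicLaxA κ (Φ t) (Ψ t) * geodesicLax κ (X t) (Φ t) (Ψ t) lam)
          t)
      ↔ (X' = Φ t * X t + κ • (X t * Ψ t) ∧ Φ' = 0 ∧ κ • Ψ' = 0) := by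
  simp only [geodesic_lax_representation_general κ _ (hΦskew t) (hΨskew t) hX hΦ hΨ]
  exact ⟨fun h => by simpa only [one_smul] using h 1,
    fun ⟨hX', hΦ', hΨ'⟩ lam => ⟨hX', by rw [hΦ', smul_zero], by rw [hΨ', smul_zero]⟩⟩
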